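/- Let τ and σ be operator means on P with σ strictly monotone in its second variable. Let A ≤ A′ and B ≤ B′ in P, and let X₀, X₁ ∈ P satisfy X₀ = (X₀σA)τ(X₀σB) and X₁ = (X₁σA′)τ(X₁σB′). Then X₀ ≤ X₁ (joint monotonicity of the deformed operator mean τ_σ). -/

import Mathlib

/-!
Write `F X = (X σ A) τ (X σ B)`. By monotonicity in `A` and `B`, the operator `X₁` is a
supersolution, `F X₁ ≤ X₁`, while `X₀` is a fixed point of `F`. Let `t` be the least real number
`≥ 1` with `X₀ ≤ t X₁`. If `t > 1`, then homogeneity gives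
`F (t X₁) = t ((X₁ σ t⁻¹A) τ (X₁ σ t⁻¹B))`, and strict monotonicity of `σ` yields a factor `q < 1`
with `X₁ σ t⁻¹A ≤ q (X₁ σ A)` and `X₁ σ t⁻¹B ≤ q (X₁ σ B)`. Hence
`X₀ = F X₀ ≤ F (t X₁) ≤ t q F X₁ ≤ t q X₁`, contradicting the minimality of `t`. So `t = 1`.
-/

open scoped ComplexOrder

variable {H : Type*} [NormedAddCommGroup H] [InnerProductSpace ℂ H] [CompleteSpace H]

/-- Membership in `P`, the cone of positive invertible bounded linear operators on `H`. -/
def PosInv (A : H →L[ℂ] H) : Prop := A.IsPositive ∧ IsUnit A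

/-- The Loewner order: `A ≤ B` iff `B - A` is positive. -/
def Loe (A B : H →L[ℂ] H) : Prop := (B - A).IsPositive

/-- The strict order `A < B`, meaning `B - A ∈ P`. -/
def LoeLT (A B : H →L[ℂ] H) : Prop := PosInv (B - A)

/-- `A^{1/2}` via the continuous functional calculus. -/
noncomputable def opSqrt (A : H →L[ℂ] H) : H →L[ℂ] H := cfc Real.sqrt A

/-- `A^{-1/2}` via the continuous functional calculus. -/
noncomputable def opInvSqrt (A : H →L[ℂ] H) : H →L[ℂ] H :=
  cfc (fun x : ℝ => (Real.sqrt x)⁻¹) A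

/-- The Thompson metric `d_T(A,B) = ‖log (A^{-1/2} B A^{-1/2})‖`. -/
noncomputable def dT (A B : H →L[ℂ] H) : ℝ :=
  ‖cfc Real.log (opInvSqrt A * B * opInvSqrt A)‖

/-- The mean induced by a function `f`: `A σ_f B = A^{1/2} f(A^{-1/2} B A^{-1/2}) A^{1/2}`. -/
noncomputable def indMean (f : ℝ → ℝ) (A B : H →L[ℂ] H) : H →L[ℂ] H :=
  opSqrt A * cfc f (opInvSqrt A * B * opInvSqrt A) * opSqrt A

/-- Convergence in the strong operator topology. -/
def SConv (A : ℕ → H →L[ℂ] H) (A0 : H →L[ℂ] H) : Prop :=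
  ∀ x : H, Filter.Tendsto (fun k => A k x) Filter.atTop (nhds (A0 x))

/-- A Kubo–Ando operator mean on `P`: a binary operation satisfying (I) joint
monotonicity, (II) the transformer equality (together with positive homogeneity),
(III) downward continuity along nonincreasing strongly convergent sequences, and
(IV) normalization. -/
structure IsOperatorMean (m : (H →L[ℂ] H) → (H →L[ℂ] H) → (H →L[ℂ] H)) : Prop where
  maps_P : ∀ A B, PosInv A → PosInv B → PosInv (m A B)
  mono : ∀ A A' B B', PosInv A → PosInv A' → PosInv B → PosInv B' →
    Loe A A' → Loe B B' → Loe (m A B) (m A' B')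
  transformer : ∀ A B C, PosInv A → PosInv B → PosInv C →
    C * m A B * C = m (C * A * C) (C * B * C)
  homog : ∀ A B, PosInv A → PosInv B → ∀ r : ℝ, 0 < r → m (r • A) (r • B) = r • m A B
  downCont : ∀ (A B : ℕ → H →L[ℂ] H) (A0 B0 : H →L[ℂ] H),
    (∀ k, PosInv (A k)) → (∀ k, PosInv (B k)) → PosInv A0 → PosInv B0 →
    (∀ k, Loe (A (k + 1)) (A k)) → (∀ k, Loe (B (k + 1)) (B k)) →
    SConv A A0 → SConv B B0 →
    (∀ k, Loe (m (A (k + 1)) (B (k + 1))) (m (A k) (B k))) ∧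
      SConv (fun k => m (A k) (B k)) (m A0 B0)
  norm_one : m 1 1 = 1

/-- `σ` is strictly monotone in its second variable: `X ∈ P` and `A < B` imply `XσA < XσB`. -/
def StrictSecond (m : (H →L[ℂ] H) → (H →L[ℂ] H) → (H →L[ℂ] H)) : Prop :=
  ∀ X A B, PosInv X → PosInv A → PosInv B → LoeLT A B → LoeLT (m X A) (m X B)

lemma loe_iff_le {A B : H →L[ℂ] H} : Loe A B ↔ A ≤ B := Iff.rfl

lemma posInv_nonneg {A : H →L[ℂ] H} (h : PosInv A) : 0 ≤ A :=
  (ContinuousLinearMap.nonneg_iff_isPositive A).2 h.1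

lemma posInv_smul {A : H →L[ℂ] H} (h : PosInv A) {r : ℝ} (hr : 0 < r) : PosInv (r • A) :=
  ⟨(ContinuousLinearMap.nonneg_iff_isPositive _).1 (smul_nonneg hr.le (posInv_nonneg h)),
    h.2.smul (Units.mk0 r (ne_of_gt hr))⟩

/-- Elements of `P` are order units: a small multiple of any positive operator lies below them. -/
lemma exists_smul_le {C D : H →L[ℂ] H} (hC : PosInv C) (hD : 0 ≤ D) :
    ∃ e : ℝ, 0 < e ∧ ∀ e' ≤ e, e' • D ≤ C := by
  have hC0 := posInv_nonneg hC
  obtain ⟨c, hc, hcC⟩ : ∃ c : ℝ, 0 < c ∧ algebraMap ℝ (H →L[ℂ] H) c ≤ C := by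
    rcases subsingleton_or_nontrivial (H →L[ℂ] H) with h | h
    · exact ⟨1, one_pos, (Subsingleton.elim _ _).le⟩
    · refine (CFC.exists_pos_algebraMap_le_iff (IsSelfAdjoint.of_nonneg hC0)).2 fun x hx => ?_
      refine lt_of_le_of_ne (spectrum_nonneg_of_nonneg hC0 hx) ?_
      rintro rfl
      exact spectrum.zero_notMem ℝ hC.2 hx
  have hDn : D ≤ algebraMap ℝ _ ‖D‖ := (IsSelfAdjoint.of_nonneg hD).le_algebraMap_norm_self
  have hpos : 0 < ‖D‖ + 1 := by positivity
  refine ⟨c / (‖D‖ + 1), by positivity, fun e' he' => ?_⟩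
  calc e' • D ≤ (c / (‖D‖ + 1)) • D := smul_le_smul_of_nonneg_right he' hD
    _ ≤ (c / (‖D‖ + 1)) • algebraMap ℝ (H →L[ℂ] H) ‖D‖ :=
        smul_le_smul_of_nonneg_left hDn (by positivity)
    _ = algebraMap ℝ _ (c / (‖D‖ + 1) * ‖D‖) := by
        rw [Algebra.algebraMap_eq_smul_one, Algebra.algebraMap_eq_smul_one, smul_smul]
    _ ≤ algebraMap ℝ _ c := by
        rw [Algebra.algebraMap_eq_smul_one, Algebra.algebraMap_eq_smul_one]
        refine smul_le_smul_of_nonneg_right ?_ zero_le_one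
        rw [div_mul_eq_mul_div, div_le_iff₀ hpos]
        nlinarith
    _ ≤ C := hcC

/-- Strict monotonicity in quantitative form: shrinking the second argument by `t⁻¹ < 1` shrinks
`X σ A` by some factor less than one. -/
lemma exists_contract {σ : (H →L[ℂ] H) → (H →L[ℂ] H) → (H →L[ℂ] H)}
    (hσ : IsOperatorMean σ) (hs : StrictSecond σ) {X A : H →L[ℂ] H}
    (hX : PosInv X) (hA : PosInv A) {t : ℝ} (ht : 1 < t) :
    ∃ e : ℝ, 0 < e ∧ ∀ e' ≤ e, σ X (t⁻¹ • A) ≤ (1 - e') • σ X A := by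
  have ht0 : 0 < t := by linarith
  have hti : 0 < 1 - t⁻¹ := by
    have := inv_lt_one_of_one_lt₀ ht
    linarith
  have hlt : LoeLT (t⁻¹ • A) A := by
    have h := posInv_smul hA hti
    rwa [sub_smul, one_smul] at h
  have h := hs X _ _ hX (posInv_smul hA (inv_pos.2 ht0)) hA hlt
  obtain ⟨e, he, hle⟩ := exists_smul_le h (posInv_nonneg (hσ.maps_P X A hX hA))
  refine ⟨e, he, fun e' he' => ?_⟩
  rw [sub_smul, one_smul]
  exact le_sub_comm.1 (hle e' he')

/-- Joint monotonicity of the deformed operator mean `τ_σ`: if `A ≤ A'`, `B ≤ B'`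
and `X₀, X₁ ∈ P` satisfy `X₀ = (X₀σA)τ(X₀σB)` and `X₁ = (X₁σA')τ(X₁σB')`,
then `X₀ ≤ X₁`. -/
theorem deformed_mean_monotone
    (τ σ : (H →L[ℂ] H) → (H →L[ℂ] H) → (H →L[ℂ] H))
    (hτ : IsOperatorMean τ) (hσ : IsOperatorMean σ) (hσstrict : StrictSecond σ)
    (A A' B B' : H →L[ℂ] H) (hA : PosInv A) (hA' : PosInv A')
    (hB : PosInv B) (hB' : PosInv B')
    (hAA' : Loe A A') (hBB' : Loe B B')
    (X₀ X₁ : H →L[ℂ] H) (hX₀ : PosInv X₀) (hX₁ : PosInv X₁)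
    (hfix₀ : X₀ = τ (σ X₀ A) (σ X₀ B)) (hfix₁ : X₁ = τ (σ X₁ A') (σ X₁ B')) :
    Loe X₀ X₁ := by
  have hXA := hσ.maps_P X₁ A hX₁ hA
  have hXB := hσ.maps_P X₁ B hX₁ hB
  have hsuper : τ (σ X₁ A) (σ X₁ B) ≤ X₁ := by
    refine le_trans ?_ hfix₁.symm.le
    exact hτ.mono _ _ _ _ hXA (hσ.maps_P _ _ hX₁ hA') hXB (hσ.maps_P _ _ hX₁ hB')
      (hσ.mono _ _ _ _ hX₁ hX₁ hA hA' (loe_iff_le.2 le_rfl) hAA')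
      (hσ.mono _ _ _ _ hX₁ hX₁ hB hB' (loe_iff_le.2 le_rfl) hBB')
  let S : Set ℝ := {t | 1 ≤ t ∧ X₀ ≤ t • X₁}
  have hclosed : IsClosed S := by
    have h : IsClosed {t : ℝ | X₀ ≤ t • X₁} := isClosed_le (by fun_prop) (by fun_prop)
    exact isClosed_Ici.inter h
  have hne : S.Nonempty := by
    obtain ⟨e, he, hle⟩ := exists_smul_le hX₁ (posInv_nonneg hX₀)
    have hm : 0 < min e 1 := lt_min he one_pos
    refine ⟨(min e 1)⁻¹, (one_le_inv₀ hm).2 (min_le_right _ _), ?_⟩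
    have h := smul_le_smul_of_nonneg_left (hle _ (min_le_left e 1)) (inv_pos.2 hm).le
    rwa [smul_smul, inv_mul_cancel₀ hm.ne', one_smul] at h
  have hbdd : BddBelow S := ⟨1, fun t ht => ht.1⟩
  obtain ⟨ht1, htX⟩ : sInf S ∈ S := hclosed.csInf_mem hne hbdd
  have hmin : ∀ s ∈ S, sInf S ≤ s := fun s hs => csInf_le hbdd hs
  generalize sInf S = t at ht1 htX hmin
  rcases ht1.eq_or_lt with rfl | ht
  · rwa [one_smul] at htX
  exfalso
  have ht0 : 0 < t := by linarith
  obtain ⟨a, ha, hea⟩ := exists_contract hσ hσstrict hX₁ hA ht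
  obtain ⟨b, hb, heb⟩ := exists_contract hσ hσstrict hX₁ hB ht
  -- A common contraction factor `q = 1 - e`, kept positive by the bound `e ≤ 1/2`.
  obtain ⟨e, he, hea', heb', he2⟩ : ∃ e : ℝ, 0 < e ∧ e ≤ a ∧ e ≤ b ∧ e ≤ 1 / 2 :=
    ⟨min (min a b) (1 / 2), by positivity, (min_le_left _ _).trans (min_le_left _ _),
      (min_le_left _ _).trans (min_le_right _ _), min_le_right _ _⟩
  have hq : 0 < 1 - e := by linarith
  have htX₁ := posInv_smul hX₁ ht0
  have hscale : ∀ {C : H →L[ℂ] H}, PosInv C → σ (t • X₁) C = t • σ X₁ (t⁻¹ • C) := by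
    intro C hC
    rw [← hσ.homog _ _ hX₁ (posInv_smul hC (inv_pos.2 ht0)) t ht0, smul_smul,
      mul_inv_cancel₀ ht0.ne', one_smul]
  have hstep : ∀ {C : H →L[ℂ] H}, PosInv C → σ X₁ (t⁻¹ • C) ≤ (1 - e) • σ X₁ C →
      σ X₀ C ≤ (t * (1 - e)) • σ X₁ C := by
    intro C hC h
    calc σ X₀ C ≤ σ (t • X₁) C := hσ.mono _ _ _ _ hX₀ htX₁ hC hC htX (loe_iff_le.2 le_rfl)
      _ = t • σ X₁ (t⁻¹ • C) := hscale hC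
      _ ≤ t • (1 - e) • σ X₁ C := smul_le_smul_of_nonneg_left h ht0.le
      _ = (t * (1 - e)) • σ X₁ C := smul_smul _ _ _
  have hr : 0 < t * (1 - e) := by positivity
  have hkey : X₀ ≤ (t * (1 - e)) • X₁ := by
    calc X₀ = τ (σ X₀ A) (σ X₀ B) := hfix₀
      _ ≤ τ ((t * (1 - e)) • σ X₁ A) ((t * (1 - e)) • σ X₁ B) :=
          hτ.mono _ _ _ _ (hσ.maps_P _ _ hX₀ hA) (posInv_smul hXA hr)
            (hσ.maps_P _ _ hX₀ hB) (posInv_smul hXB hr)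
            (hstep hA (hea e hea')) (hstep hB (heb e heb'))
      _ = (t * (1 - e)) • τ (σ X₁ A) (σ X₁ B) := hτ.homog _ _ hXA hXB _ hr
      _ ≤ (t * (1 - e)) • X₁ := smul_le_smul_of_nonneg_left hsuper hr.le
  have hmem : max 1 (t * (1 - e)) ∈ S :=
    ⟨le_max_left _ _, hkey.trans
      (smul_le_smul_of_nonneg_right (le_max_right _ _) (posInv_nonneg hX₁))⟩
  have hlt : max 1 (t * (1 - e)) < t := max_lt ht (by nlinarith)
  exact absurd (hmin _ hmem) (not_le.2 hlt)
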